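/- If LOC(H,T) has a unique subspace degradation, then its subspace coding capacity satisfies C_SS(H,T) = max over α-type input distributions on F^{T×M} of [ J(rank(X);rank(Y)) + I(rank(X);rank(Y)) ], where Y = XH; moreover, for such a LOC the joint distribution of (rank(X), rank(Y)) under an α-type input depends on the input distribution only through the rank distribution of X, so this maximum can be computed by maximizing over input rank distributions. -/

import Mathlib

open scoped Classical
open Finset Matrix Module

noncomputable section

/-- χ_m[r] = (q^m − 1)(q^m − q)⋯(q^m − q^{r−1}), with χ_m[0] = 1. -/
def chi (q m r : ℕ) : ℕ := ∏ i ∈ Finset.range r, (q ^ m - q ^ i)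

/-- χ̃_m[r] = χ_m[r] · q^{−mr}, as a real number. -/
def chiTilde (q m r : ℕ) : ℝ := (chi q m r : ℝ) / (q : ℝ) ^ (m * r)

/-- Gaussian binomial [m choose r]_q = χ_m[r]/χ_r[r], as a real number. -/
def gaussR (q m r : ℕ) : ℝ := (chi q m r : ℝ) / (chi q r r : ℝ)

variable {F : Type} [Field F] [Fintype F]

/-- Column space of a matrix. -/
def colSpace {m n : ℕ} (A : Matrix (Fin m) (Fin n) F) : Submodule F (Fin m → F) :=
  LinearMap.range A.mulVecLin

/-- Row space of a matrix. -/
def rowSpace {m n : ℕ} (A : Matrix (Fin m) (Fin n) F) : Submodule F (Fin n → F) :=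
  colSpace Aᵀ

/-- Pr{XH = Y} for a random transfer matrix H with PMF `pH`, input `X`, output `Y`. -/
def prXY {k M N : ℕ} (pH : Matrix (Fin M) (Fin N) F → ℝ)
    (X : Matrix (Fin k) (Fin M) F) (Y : Matrix (Fin k) (Fin N) F) : ℝ :=
  ∑ Hm : Matrix (Fin M) (Fin N) F, if X * Hm = Y then pH Hm else 0

/-- A PMF on a finite type: nonnegative and summing to one. -/
def IsPMF {Ω : Type*} [Fintype Ω] (p : Ω → ℝ) : Prop :=
  (∀ x, 0 ≤ p x) ∧ ∑ x, p x = 1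

/-- α-type distribution: matrices with the same row space are equiprobable. -/
def IsAlphaType {T M : ℕ} (p : Matrix (Fin T) (Fin M) F → ℝ) : Prop :=
  ∀ X X' : Matrix (Fin T) (Fin M) F, rowSpace X = rowSpace X' → p X = p X'

/-- Mutual information I(f;g) (base 2) between two functions of a finitely
distributed random element with PMF `p`; terms of zero probability vanish. -/
def mutualInfo {Ω A B : Type*} [Fintype Ω] (p : Ω → ℝ) (f : Ω → A) (g : Ω → B) : ℝ :=
  ∑ ω : Ω, p ω * Real.logb 2
    ((∑ ω' : Ω, if f ω' = f ω ∧ g ω' = g ω then p ω' else 0) /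
      ((∑ ω' : Ω, if f ω' = f ω then p ω' else 0) *
        (∑ ω' : Ω, if g ω' = g ω then p ω' else 0)))

/-- Joint PMF of the input X and the independent transfer matrix H;
the channel output is Y = XH, i.e., `ω.1 * ω.2`. -/
def jointPMF {T M N : ℕ} (pX : Matrix (Fin T) (Fin M) F → ℝ)
    (pH : Matrix (Fin M) (Fin N) F → ℝ) :
    Matrix (Fin T) (Fin M) F × Matrix (Fin M) (Fin N) F → ℝ :=
  fun ω => pX ω.1 * pH ω.2

/-- I(X;Y) for the LOC with input PMF `pX` and transfer PMF `pH`. -/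
def miXY {T M N : ℕ} (pX : Matrix (Fin T) (Fin M) F → ℝ)
    (pH : Matrix (Fin M) (Fin N) F → ℝ) : ℝ :=
  mutualInfo (jointPMF pX pH) (fun ω => ω.1) (fun ω => ω.1 * ω.2)

/-- I(⟨X⟩;⟨Y⟩), mutual information between the column spaces. -/
def miColCol {T M N : ℕ} (pX : Matrix (Fin T) (Fin M) F → ℝ)
    (pH : Matrix (Fin M) (Fin N) F → ℝ) : ℝ :=
  mutualInfo (jointPMF pX pH) (fun ω => colSpace ω.1) (fun ω => colSpace (ω.1 * ω.2))

/-- I(⟨X^T⟩;⟨Y^T⟩), mutual information between the row spaces. -/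
def miRowRow {T M N : ℕ} (pX : Matrix (Fin T) (Fin M) F → ℝ)
    (pH : Matrix (Fin M) (Fin N) F → ℝ) : ℝ :=
  mutualInfo (jointPMF pX pH) (fun ω => rowSpace ω.1) (fun ω => rowSpace (ω.1 * ω.2))

/-- I(rank(X);rank(Y)). -/
def miRankRank {T M N : ℕ} (pX : Matrix (Fin T) (Fin M) F → ℝ)
    (pH : Matrix (Fin M) (Fin N) F → ℝ) : ℝ :=
  mutualInfo (jointPMF pX pH) (fun ω => ω.1.rank) (fun ω => (ω.1 * ω.2).rank)

/-- Pr{rank(X) = r}. -/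
def prRankX {T M : ℕ} (pX : Matrix (Fin T) (Fin M) F → ℝ) (r : ℕ) : ℝ :=
  ∑ x : Matrix (Fin T) (Fin M) F, if x.rank = r then pX x else 0

/-- Pr{rank(X) = r, rank(Y) = s} where Y = XH. -/
def prRankXY {T M N : ℕ} (pX : Matrix (Fin T) (Fin M) F → ℝ)
    (pH : Matrix (Fin M) (Fin N) F → ℝ) (r s : ℕ) : ℝ :=
  ∑ ω : Matrix (Fin T) (Fin M) F × Matrix (Fin M) (Fin N) F,
    if ω.1.rank = r ∧ (ω.1 * ω.2).rank = s then jointPMF pX pH ω else 0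

/-- J(rank(X);rank(Y)) = ∑_{r,s} Pr{rank X = r, rank Y = s} · log₂(χ_T[s]/χ_r[s]). -/
def Jrank (q : ℕ) {T M N : ℕ} (pX : Matrix (Fin T) (Fin M) F → ℝ)
    (pH : Matrix (Fin M) (Fin N) F → ℝ) : ℝ :=
  ∑ r ∈ Finset.range (T + 1), ∑ s ∈ Finset.range (T + 1),
    prRankXY pX pH r s * Real.logb 2 ((chi q T s : ℝ) / (chi q r s : ℝ))

/-- Row-space-symmetric LOC: the transition probability P(Y|X) for ⟨Y⟩ ⊆ ⟨X⟩
is determined by the row spaces of the input and output matrices. -/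
def RowSpaceSymmetric (T : ℕ) {M N : ℕ} (pH : Matrix (Fin M) (Fin N) F → ℝ) : Prop :=
  ∀ (X X' : Matrix (Fin T) (Fin M) F) (Y Y' : Matrix (Fin T) (Fin N) F),
    colSpace Y ≤ colSpace X → colSpace Y' ≤ colSpace X' →
    rowSpace X = rowSpace X' → rowSpace Y = rowSpace Y' →
    prXY pH X Y = prXY pH X' Y'

/-- Pr{⟨XH⟩ = V} for a fixed input matrix X. -/
def prColY (T : ℕ) {M N : ℕ} (pH : Matrix (Fin M) (Fin N) F → ℝ)
    (X : Matrix (Fin T) (Fin M) F) (V : Submodule F (Fin T → F)) : ℝ :=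
  ∑ Hm : Matrix (Fin M) (Fin N) F, if colSpace (X * Hm) = V then pH Hm else 0

/-- Unique subspace degradation: Pr{⟨XH⟩ = V} is the same for all inputs X
with the same column space. -/
def UniqueSubspaceDegradation (T : ℕ) {M N : ℕ}
    (pH : Matrix (Fin M) (Fin N) F → ℝ) : Prop :=
  ∀ (V : Submodule F (Fin T → F)) (X X' : Matrix (Fin T) (Fin M) F),
    colSpace X = colSpace X' → prColY T pH X V = prColY T pH X' V

/-- Rank-symmetric LOC: P(Y|X) = μ(rank X, rank Y) when ⟨Y⟩ ⊆ ⟨X⟩, and 0 otherwise. -/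
def RankSymmetric (T : ℕ) {M N : ℕ} (pH : Matrix (Fin M) (Fin N) F → ℝ) : Prop :=
  ∃ μ : ℕ → ℕ → ℝ, (∀ a b, 0 ≤ μ a b ∧ μ a b ≤ 1) ∧
    ∀ (X : Matrix (Fin T) (Fin M) F) (Y : Matrix (Fin T) (Fin N) F),
      prXY pH X Y = if colSpace Y ≤ colSpace X then μ X.rank Y.rank else 0

/-- rank*(H) = max{r : Pr{rank H = r} > 0}. -/
def rankStar {M N : ℕ} (pH : Matrix (Fin M) (Fin N) F → ℝ) : ℕ :=
  sSup {r : ℕ | 0 < ∑ Hm : Matrix (Fin M) (Fin N) F, if Hm.rank = r then pH Hm else 0}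


set_option linter.unusedSectionVars false

/-! ### Linear algebra -/

lemma aux_exists_map {E : Type} [AddCommGroup E] [Module F E] [FiniteDimensional F E]
    {W W' : Submodule F E} (h : finrank F W = finrank F W') :
    ∃ g : E ≃ₗ[F] E, W.map (g : E →ₗ[F] E) = W' := by
  obtain ⟨g, hg⟩ := Submodule.exists_linearEquiv_restrict_eq (LinearEquiv.ofFinrankEq W W' h)
  refine ⟨g, Submodule.eq_of_le_of_finrank_eq ?_ ?_⟩
  · rintro _ ⟨x, hx, rfl⟩
    have := hg ⟨x, hx⟩
    simp only [LinearEquiv.coe_coe]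
    rw [← this]
    exact Subtype.property _
  · rw [LinearEquiv.finrank_map_eq, h]

lemma aux_exists_map_flag {E : Type} [AddCommGroup E] [Module F E] [FiniteDimensional F E]
    {U U' V V' : Submodule F E} (hU : finrank F U = finrank F U')
    (hV : finrank F V = finrank F V') (hVU : V ≤ U) (hVU' : V' ≤ U') :
    ∃ g : E ≃ₗ[F] E, U.map (g : E →ₗ[F] E) = U' ∧ V.map (g : E →ₗ[F] E) = V' := by
  obtain ⟨g1, hg1⟩ := aux_exists_map hU
  set V1 := V.map (g1 : E →ₗ[F] E) with hV1
  have hV1U : V1 ≤ U' := by rw [← hg1]; exact Submodule.map_mono hVU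
  have hf1 : finrank F V1 = finrank F V' := by rw [hV1, LinearEquiv.finrank_map_eq, hV]
  have e1 : finrank F (V1.comap U'.subtype) = finrank F (V'.comap U'.subtype) := by
    rw [(Submodule.comapSubtypeEquivOfLe hV1U).finrank_eq,
      (Submodule.comapSubtypeEquivOfLe hVU').finrank_eq, hf1]
  obtain ⟨h, hh⟩ := aux_exists_map e1
  obtain ⟨g2, hg2⟩ := Submodule.exists_linearEquiv_restrict_eq h
  refine ⟨g1 ≪≫ₗ g2, ?_, ?_⟩
  · refine Submodule.eq_of_le_of_finrank_eq ?_ ?_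
    · rintro _ ⟨x, hx, rfl⟩
      have hx' : g1 x ∈ U' := by rw [← hg1]; exact ⟨x, hx, rfl⟩
      have := hg2 ⟨g1 x, hx'⟩
      simp only [LinearEquiv.coe_coe, LinearEquiv.trans_apply]
      rw [← this]
      exact Subtype.property _
    · rw [LinearEquiv.finrank_map_eq, hU]
  · refine Submodule.eq_of_le_of_finrank_eq ?_ ?_
    · rintro _ ⟨x, hx, rfl⟩
      have hx1 : g1 x ∈ V1 := ⟨x, hx, rfl⟩
      have := hg2 ⟨g1 x, hV1U hx1⟩
      simp only [LinearEquiv.coe_coe, LinearEquiv.trans_apply]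
      rw [← this]
      have h3 : h ⟨g1 x, hV1U hx1⟩ ∈ V'.comap U'.subtype := by
        rw [← hh]; exact ⟨⟨g1 x, hV1U hx1⟩, hx1, rfl⟩
      exact h3
    · rw [LinearEquiv.finrank_map_eq, hV]

/-- The matrix of a linear automorphism. -/
def gmat {T : ℕ} (g : (Fin T → F) ≃ₗ[F] (Fin T → F)) : Matrix (Fin T) (Fin T) F :=
  LinearMap.toMatrix' (g : (Fin T → F) →ₗ[F] (Fin T → F))

lemma colSpace_gmat_mul {T M : ℕ} (g : (Fin T → F) ≃ₗ[F] (Fin T → F))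
    (X : Matrix (Fin T) (Fin M) F) :
    colSpace (gmat g * X) = (colSpace X).map (g : (Fin T → F) →ₗ[F] (Fin T → F)) := by
  unfold colSpace gmat
  rw [Matrix.mulVecLin_mul, LinearMap.range_comp]
  congr 1
  exact Matrix.toLin'_toMatrix' _

lemma gmat_symm_mul {T : ℕ} (g : (Fin T → F) ≃ₗ[F] (Fin T → F)) :
    gmat g.symm * gmat g = 1 := by
  unfold gmat
  rw [← LinearMap.toMatrix'_comp]
  simp

lemma gmat_mul_symm {T : ℕ} (g : (Fin T → F) ≃ₗ[F] (Fin T → F)) :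
    gmat g * gmat g.symm = 1 := gmat_symm_mul g.symm

/-- Left multiplication by an invertible matrix, as a permutation. -/
def gperm {T M : ℕ} (g : (Fin T → F) ≃ₗ[F] (Fin T → F)) :
    Matrix (Fin T) (Fin M) F ≃ Matrix (Fin T) (Fin M) F where
  toFun X := gmat g * X
  invFun X := gmat g.symm * X
  left_inv X := by
    change gmat g.symm * (gmat g * X) = X
    rw [← Matrix.mul_assoc, gmat_symm_mul, Matrix.one_mul]
  right_inv X := by
    change gmat g * (gmat g.symm * X) = X
    rw [← Matrix.mul_assoc, gmat_mul_symm, Matrix.one_mul]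

lemma colSpace_mul_le {a b c : ℕ} (X : Matrix (Fin a) (Fin b) F) (Y : Matrix (Fin b) (Fin c) F) :
    colSpace (X * Y) ≤ colSpace X := by
  unfold colSpace
  rw [Matrix.mulVecLin_mul]
  exact LinearMap.range_comp_le_range _ _

lemma rowSpace_gmat_mul {T M : ℕ} (g : (Fin T → F) ≃ₗ[F] (Fin T → F))
    (X : Matrix (Fin T) (Fin M) F) : rowSpace (gmat g * X) = rowSpace X := by
  unfold rowSpace
  apply le_antisymm
  · rw [Matrix.transpose_mul]; exact colSpace_mul_le _ _
  · have : X = gmat g.symm * (gmat g * X) := by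
      rw [← Matrix.mul_assoc, gmat_symm_mul, Matrix.one_mul]
    conv_lhs => rw [this]
    rw [Matrix.transpose_mul]
    exact colSpace_mul_le _ _

lemma finrank_colSpace {a b : ℕ} (X : Matrix (Fin a) (Fin b) F) :
    finrank F (colSpace X) = X.rank := rfl

lemma rank_eq_of_rowSpace {a b : ℕ} {X X' : Matrix (Fin a) (Fin b) F}
    (h : rowSpace X = rowSpace X') : X.rank = X'.rank := by
  rw [← Matrix.rank_transpose X, ← Matrix.rank_transpose X', ← finrank_colSpace,
    ← finrank_colSpace]
  unfold rowSpace at h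
  rw [h]

/-! ### Counting subspaces -/

/-- Subspaces of `U` of dimension `s`. -/
def subs {T : ℕ} (U : Submodule F (Fin T → F)) (s : ℕ) : Finset (Submodule F (Fin T → F)) :=
  Finset.univ.filter (fun V => V ≤ U ∧ finrank F V = s)

lemma card_li {T : ℕ} (U : Submodule F (Fin T → F)) (s : ℕ) (hs : s ≤ finrank F U) :
    (Finset.univ.filter (fun f : Fin s → Fin T → F =>
      LinearIndependent F f ∧ ∀ i, f i ∈ U)).card = chi (Fintype.card F) (finrank F U) s := by
  have h := card_linearIndependent (K := F) (V := U) hs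
  unfold chi
  rw [← Fin.prod_univ_eq_prod_range (fun i => Fintype.card F ^ finrank F U - Fintype.card F ^ i) s,
    ← h, ← Fintype.card_subtype, ← Nat.card_eq_fintype_card]
  refine Nat.card_congr ⟨fun f => ⟨fun i => ⟨f.1 i, f.2.2 i⟩, ?_⟩,
    fun f => ⟨fun i => (f.1 i : Fin T → F), ?_, fun i => (f.1 i).2⟩, ?_, ?_⟩
  · apply LinearIndependent.of_comp U.subtype
    exact f.2.1
  · exact f.2.map' U.subtype (Submodule.ker_subtype U)
  · intro f; rfl
  · intro f; rfl

lemma card_subs_mul {T : ℕ} (U : Submodule F (Fin T → F)) (s : ℕ) (hs : s ≤ finrank F U) :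
    (subs U s).card * chi (Fintype.card F) s s = chi (Fintype.card F) (finrank F U) s := by
  rw [← card_li U s hs]
  rw [Finset.card_eq_sum_card_fiberwise (f := fun f => Submodule.span F (Set.range f))
    (t := subs U s)]
  · rw [Finset.sum_const_nat]
    intro V hV
    simp only [subs, Finset.mem_filter, Finset.mem_univ, true_and] at hV
    have h := card_li V s hV.2.ge
    rw [hV.2] at h
    rw [← h]
    congr 1
    ext f
    simp only [Finset.mem_filter, Finset.mem_univ, true_and]
    constructor
    · rintro ⟨⟨h1, h2⟩, h3⟩
      refine ⟨h1, fun i => ?_⟩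
      rw [← h3]
      exact Submodule.subset_span ⟨i, rfl⟩
    · rintro ⟨h1, h2⟩
      refine ⟨⟨h1, fun i => hV.1 (h2 i)⟩, ?_⟩
      apply Submodule.eq_of_le_of_finrank_eq
      · rw [Submodule.span_le]
        rintro _ ⟨i, rfl⟩
        exact h2 i
      · rw [finrank_span_eq_card h1, hV.2, Fintype.card_fin]
  · intro f hf
    simp only [Finset.coe_filter, Finset.mem_univ, true_and, Set.mem_ofPred_eq] at hf
    simp only [subs, Finset.coe_filter, Finset.mem_univ, true_and, Set.mem_ofPred_eq]
    refine ⟨?_, ?_⟩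
    · rw [Submodule.span_le]
      rintro _ ⟨i, rfl⟩
      exact hf.2 i
    · rw [finrank_span_eq_card hf.1, Fintype.card_fin]

lemma chi_pos (m s : ℕ) (h : s ≤ m) : 0 < chi (Fintype.card F) m s := by
  unfold chi
  apply Finset.prod_pos
  intro i hi
  have := Finset.mem_range.1 hi
  exact Nat.sub_pos_of_lt (Nat.pow_lt_pow_right Fintype.one_lt_card (by omega))

lemma chi_ratio {T : ℕ} (U : Submodule F (Fin T → F)) (s : ℕ) (hs : s ≤ finrank F U) :
    0 < (subs U s).card ∧ 0 < (subs (⊤ : Submodule F (Fin T → F)) s).card ∧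
    (chi (Fintype.card F) T s : ℝ) / chi (Fintype.card F) (finrank F U) s =
      ((subs (⊤ : Submodule F (Fin T → F)) s).card : ℝ) / (subs U s).card := by
  have hT : finrank F (⊤ : Submodule F (Fin T → F)) = T := by simp
  have hUT : finrank F U ≤ T := by
    simpa using Submodule.finrank_le U
  have h1 := card_subs_mul U s hs
  have h2 := card_subs_mul (⊤ : Submodule F (Fin T → F)) s (by rw [hT]; omega)
  rw [hT] at h2
  have p0 := chi_pos (F := F) s s le_rfl
  have p1 := chi_pos (F := F) _ s hs
  have p2 := chi_pos (F := F) T s (by omega)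
  rw [← h1] at p1
  rw [← h2] at p2
  have q1 := Nat.pos_of_mul_pos_right p1
  have q2 := Nat.pos_of_mul_pos_right p2
  refine ⟨by grind, by grind, ?_⟩
  rw [← h1, ← h2]
  push_cast
  rw [mul_div_mul_right]
  positivity

/-! ### Channel symmetry -/

lemma prColY_gmat {T M N : ℕ} (pH : Matrix (Fin M) (Fin N) F → ℝ)
    (g : (Fin T → F) ≃ₗ[F] (Fin T → F)) (X : Matrix (Fin T) (Fin M) F)
    (V : Submodule F (Fin T → F)) :
    prColY T pH (gmat g * X) (V.map (g : (Fin T → F) →ₗ[F] (Fin T → F))) = prColY T pH X V := by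
  unfold prColY
  refine Finset.sum_congr rfl fun Hm _ => ?_
  rw [Matrix.mul_assoc, colSpace_gmat_mul]
  simp only [(Submodule.map_injective_of_injective g.injective).eq_iff]

lemma prColY_key {T M N : ℕ} {pH : Matrix (Fin M) (Fin N) F → ℝ}
    (husd : UniqueSubspaceDegradation T pH) {X X' : Matrix (Fin T) (Fin M) F}
    {V V' : Submodule F (Fin T → F)} (hX : X.rank = X'.rank) (hV : V ≤ colSpace X)
    (hV' : V' ≤ colSpace X') (h : finrank F V = finrank F V') :
    prColY T pH X V = prColY T pH X' V' := by
  obtain ⟨g, h1, h2⟩ := aux_exists_map_flag (U := colSpace X) (U' := colSpace X') hX h hV hV'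
  rw [← prColY_gmat pH g X V, h2]
  apply husd
  rw [colSpace_gmat_mul, h1]

/-- Pr{rank(XH) = s} for fixed X. -/
def prRk {T M N : ℕ} (pH : Matrix (Fin M) (Fin N) F → ℝ)
    (X : Matrix (Fin T) (Fin M) F) (s : ℕ) : ℝ :=
  ∑ Hm : Matrix (Fin M) (Fin N) F, if (X * Hm).rank = s then pH Hm else 0

lemma prRk_eq {T M N : ℕ} (pH : Matrix (Fin M) (Fin N) F → ℝ)
    (X : Matrix (Fin T) (Fin M) F) (s : ℕ) :
    prRk pH X s = ∑ V ∈ subs (colSpace X) s, prColY T pH X V := by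
  unfold prRk prColY
  rw [Finset.sum_comm]
  refine Finset.sum_congr rfl fun Hm _ => ?_
  rw [Finset.sum_ite_eq]
  simp only [subs, Finset.mem_filter, Finset.mem_univ, true_and, colSpace_mul_le,
    finrank_colSpace]

lemma prRk_card {T M N : ℕ} {pH : Matrix (Fin M) (Fin N) F → ℝ}
    (husd : UniqueSubspaceDegradation T pH) (X : Matrix (Fin T) (Fin M) F)
    {V : Submodule F (Fin T → F)} (hV : V ≤ colSpace X) :
    prRk pH X (finrank F V) = (subs (colSpace X) (finrank F V)).card * prColY T pH X V := by
  rw [prRk_eq, Finset.sum_congr rfl (g := fun _ => prColY T pH X V), Finset.sum_const,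
    nsmul_eq_mul]
  intro V' hV'
  simp only [subs, Finset.mem_filter, Finset.mem_univ, true_and] at hV'
  exact prColY_key husd rfl hV'.1 hV hV'.2

lemma prRk_rank {T M N : ℕ} {pH : Matrix (Fin M) (Fin N) F → ℝ}
    (husd : UniqueSubspaceDegradation T pH) {X X' : Matrix (Fin T) (Fin M) F}
    (hX : X.rank = X'.rank) (s : ℕ) : prRk pH X s = prRk pH X' s := by
  by_cases hs : s ≤ X.rank
  · have hs' : s ≤ X'.rank := hX ▸ hs
    obtain ⟨V, hV⟩ := Finset.card_pos.1 (chi_ratio (colSpace X) s hs).1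
    obtain ⟨V', hV'⟩ := Finset.card_pos.1 (chi_ratio (colSpace X') s hs').1
    simp only [subs, Finset.mem_filter, Finset.mem_univ, true_and] at hV hV'
    have e1 := prRk_card husd X hV.1
    have e2 := prRk_card husd X' hV'.1
    rw [hV.2] at e1
    rw [hV'.2] at e2
    rw [e1, e2, prColY_key husd hX hV.1 hV'.1 (hV.2.trans hV'.2.symm)]
    congr 2
    have c1 := card_subs_mul (colSpace X) s hs
    have c2 := card_subs_mul (colSpace X') s hs'
    rw [finrank_colSpace] at c1 c2
    rw [hX, ← c2] at c1
    exact Nat.eq_of_mul_eq_mul_right (chi_pos (F := F) s s le_rfl) c1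
  · have key : ∀ Z : Matrix (Fin T) (Fin M) F, ¬ s ≤ Z.rank → prRk pH Z s = 0 := by
      intro Z hZ
      apply Finset.sum_eq_zero
      intro Hm _
      rw [if_neg]
      intro h
      have := Matrix.rank_mul_le_left Z Hm
      omega
    rw [key X hs, key X' (hX ▸ hs)]

lemma joint_factor {T M N : ℕ} {A B : Type} [DecidableEq A] [DecidableEq B]
    (pX : Matrix (Fin T) (Fin M) F → ℝ)
    {pH : Matrix (Fin M) (Fin N) F → ℝ} (hpH : IsPMF pH)
    (f : Matrix (Fin T) (Fin M) F → A) (g : Matrix (Fin T) (Fin N) F → B) (a : A) (b : B) (c : ℝ)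
    (h : ∀ X, f X = a → (∑ Hm, if g (X * Hm) = b then pH Hm else 0) = c) :
    (∑ ω : Matrix (Fin T) (Fin M) F × Matrix (Fin M) (Fin N) F,
      if f ω.1 = a ∧ g (ω.1 * ω.2) = b then jointPMF pX pH ω else 0) =
    (∑ ω : Matrix (Fin T) (Fin M) F × Matrix (Fin M) (Fin N) F,
      if f ω.1 = a then jointPMF pX pH ω else 0) * c := by
  rw [Fintype.sum_prod_type, Fintype.sum_prod_type, Finset.sum_mul]
  refine Finset.sum_congr rfl fun X _ => ?_
  by_cases hX : f X = a
  · simp only [hX, true_and, if_true, jointPMF]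
    rw [← Finset.mul_sum, hpH.2, mul_one, ← h X hX, Finset.mul_sum]
    refine Finset.sum_congr rfl fun Hm _ => ?_
    split_ifs <;> simp
  · simp [hX]

lemma prRankX_joint {T M N : ℕ} (pX : Matrix (Fin T) (Fin M) F → ℝ)
    {pH : Matrix (Fin M) (Fin N) F → ℝ} (hpH : IsPMF pH) (r : ℕ) :
    (∑ ω : Matrix (Fin T) (Fin M) F × Matrix (Fin M) (Fin N) F,
      if ω.1.rank = r then jointPMF pX pH ω else 0) = prRankX pX r := by
  unfold prRankX
  rw [Fintype.sum_prod_type]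
  refine Finset.sum_congr rfl fun X _ => ?_
  by_cases hX : X.rank = r
  · simp only [hX, if_true, jointPMF]
    rw [← Finset.mul_sum, hpH.2, mul_one]
  · simp [hX]

lemma prRankXY_factor {T M N : ℕ} (pX : Matrix (Fin T) (Fin M) F → ℝ)
    {pH : Matrix (Fin M) (Fin N) F → ℝ} (hpH : IsPMF pH)
    (husd : UniqueSubspaceDegradation T pH) (X0 : Matrix (Fin T) (Fin M) F) (s : ℕ) :
    prRankXY pX pH X0.rank s = prRankX pX X0.rank * prRk pH X0 s := by
  unfold prRankXY
  rw [joint_factor pX hpH (fun X => X.rank) (fun Y => Y.rank) X0.rank s (prRk pH X0 s),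
    prRankX_joint pX hpH]
  intro X hX
  exact prRk_rank husd hX s

lemma prRankXY_eq {T M N : ℕ} {pH : Matrix (Fin M) (Fin N) F → ℝ} (hpH : IsPMF pH)
    (husd : UniqueSubspaceDegradation T pH) (pX pX' : Matrix (Fin T) (Fin M) F → ℝ)
    (h : ∀ r : ℕ, prRankX pX r = prRankX pX' r) (r s : ℕ) :
    prRankXY pX pH r s = prRankXY pX' pH r s := by
  by_cases hr : ∃ X0 : Matrix (Fin T) (Fin M) F, X0.rank = r
  · obtain ⟨X0, rfl⟩ := hr
    rw [prRankXY_factor pX hpH husd, prRankXY_factor pX' hpH husd, h]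
  · push Not at hr
    unfold prRankXY
    simp [hr]

/-! ### Information quantities -/

lemma Jrank_eq (q : ℕ) {T M N : ℕ} (pX : Matrix (Fin T) (Fin M) F → ℝ)
    (pH : Matrix (Fin M) (Fin N) F → ℝ) :
    Jrank q pX pH = ∑ ω : Matrix (Fin T) (Fin M) F × Matrix (Fin M) (Fin N) F,
      jointPMF pX pH ω * Real.logb 2
        ((chi q T (ω.1 * ω.2).rank : ℝ) / (chi q ω.1.rank (ω.1 * ω.2).rank : ℝ)) := by
  unfold Jrank prRankXY
  simp only [Finset.sum_mul]
  have : ∀ r ∈ Finset.range (T + 1), (∑ s ∈ Finset.range (T + 1),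
      ∑ ω : Matrix (Fin T) (Fin M) F × Matrix (Fin M) (Fin N) F,
        (if ω.1.rank = r ∧ (ω.1 * ω.2).rank = s then jointPMF pX pH ω else 0) *
          Real.logb 2 ((chi q T s : ℝ) / (chi q r s : ℝ))) =
      ∑ ω : Matrix (Fin T) (Fin M) F × Matrix (Fin M) (Fin N) F,
        ∑ s ∈ Finset.range (T + 1),
        (if ω.1.rank = r ∧ (ω.1 * ω.2).rank = s then jointPMF pX pH ω else 0) *
          Real.logb 2 ((chi q T s : ℝ) / (chi q r s : ℝ)) := fun r _ => Finset.sum_comm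
  rw [Finset.sum_congr rfl this, Finset.sum_comm]
  refine Finset.sum_congr rfl fun ω _ => ?_
  have h1 : ω.1.rank ∈ Finset.range (T + 1) := by
    have := ω.1.rank_le_height
    simp; omega
  have h2 : (ω.1 * ω.2).rank ∈ Finset.range (T + 1) := by
    have := (ω.1 * ω.2).rank_le_height
    simp; omega
  rw [Finset.sum_eq_single_of_mem _ h1, Finset.sum_eq_single_of_mem _ h2]
  · simp
  · intro b _ hb
    rw [if_neg (fun h => hb h.2.symm), zero_mul]
  · intro b _ hb
    apply Finset.sum_eq_zero
    intro s _
    rw [if_neg (fun h => hb h.1.symm), zero_mul]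

/-- Pr{⟨Y⟩ = V}. -/
def PY {T M N : ℕ} (pX : Matrix (Fin T) (Fin M) F → ℝ)
    (pH : Matrix (Fin M) (Fin N) F → ℝ) (V : Submodule F (Fin T → F)) : ℝ :=
  ∑ ω : Matrix (Fin T) (Fin M) F × Matrix (Fin M) (Fin N) F,
    if colSpace (ω.1 * ω.2) = V then jointPMF pX pH ω else 0

/-- Pr{rank Y = s}. -/
def PR {T M N : ℕ} (pX : Matrix (Fin T) (Fin M) F → ℝ)
    (pH : Matrix (Fin M) (Fin N) F → ℝ) (s : ℕ) : ℝ :=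
  ∑ ω : Matrix (Fin T) (Fin M) F × Matrix (Fin M) (Fin N) F,
    if (ω.1 * ω.2).rank = s then jointPMF pX pH ω else 0

/-- The number of `s`-dimensional subspaces of `F^T`. -/
def GT (F : Type) [Field F] [Fintype F] (T s : ℕ) : ℝ :=
  ((subs (⊤ : Submodule F (Fin T → F)) s).card : ℝ)

lemma PR_eq {T M N : ℕ} (pX : Matrix (Fin T) (Fin M) F → ℝ)
    (pH : Matrix (Fin M) (Fin N) F → ℝ) (s : ℕ) :
    PR pX pH s = ∑ V ∈ subs (⊤ : Submodule F (Fin T → F)) s, PY pX pH V := by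
  unfold PR PY
  rw [Finset.sum_comm]
  refine Finset.sum_congr rfl fun ω _ => ?_
  rw [Finset.sum_ite_eq]
  simp only [subs, Finset.mem_filter, Finset.mem_univ, true_and, le_top, finrank_colSpace]

/-- The divergence of the output subspace from uniform given its dimension. -/
def Dv {T M N : ℕ} (pX : Matrix (Fin T) (Fin M) F → ℝ)
    (pH : Matrix (Fin M) (Fin N) F → ℝ) : ℝ :=
  ∑ ω : Matrix (Fin T) (Fin M) F × Matrix (Fin M) (Fin N) F,
    jointPMF pX pH ω * Real.logb 2
      (PY pX pH (colSpace (ω.1 * ω.2)) * GT F T (ω.1 * ω.2).rank / PR pX pH (ω.1 * ω.2).rank)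

lemma joint_nonneg {T M N : ℕ} {pX : Matrix (Fin T) (Fin M) F → ℝ}
    {pH : Matrix (Fin M) (Fin N) F → ℝ} (hX : IsPMF pX) (hH : IsPMF pH)
    (ω : Matrix (Fin T) (Fin M) F × Matrix (Fin M) (Fin N) F) : 0 ≤ jointPMF pX pH ω :=
  mul_nonneg (hX.1 _) (hH.1 _)

lemma joint_sum {T M N : ℕ} {pX : Matrix (Fin T) (Fin M) F → ℝ}
    {pH : Matrix (Fin M) (Fin N) F → ℝ} (hX : IsPMF pX) (hH : IsPMF pH) :
    ∑ ω : Matrix (Fin T) (Fin M) F × Matrix (Fin M) (Fin N) F, jointPMF pX pH ω = 1 := by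
  rw [Fintype.sum_prod_type]
  simp only [jointPMF, ← Finset.mul_sum, hH.2, mul_one, hX.2]

lemma ite_sum_pos {Ω : Type} [Fintype Ω] (p : Ω → ℝ) (hp : ∀ x, 0 ≤ p x) (P : Ω → Prop)
    [DecidablePred P]    (ω : Ω) (h : P ω) (hω : 0 < p ω) : 0 < ∑ x, if P x then p x else 0 := by
  refine Finset.sum_pos' (fun x _ => ?_) ⟨ω, Finset.mem_univ _, by rwa [if_pos h]⟩
  split_ifs
  · exact hp x
  · exact le_rfl

lemma PY_pos {T M N : ℕ} {pX : Matrix (Fin T) (Fin M) F → ℝ}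
    {pH : Matrix (Fin M) (Fin N) F → ℝ} (hX : IsPMF pX) (hH : IsPMF pH)
    (ω : Matrix (Fin T) (Fin M) F × Matrix (Fin M) (Fin N) F) (h : 0 < jointPMF pX pH ω) :
    0 < PY pX pH (colSpace (ω.1 * ω.2)) :=
  ite_sum_pos _ (joint_nonneg hX hH)
    (fun ω' => colSpace (ω'.1 * ω'.2) = colSpace (ω.1 * ω.2)) ω rfl h

lemma PR_pos {T M N : ℕ} {pX : Matrix (Fin T) (Fin M) F → ℝ}
    {pH : Matrix (Fin M) (Fin N) F → ℝ} (hX : IsPMF pX) (hH : IsPMF pH)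
    (ω : Matrix (Fin T) (Fin M) F × Matrix (Fin M) (Fin N) F) (h : 0 < jointPMF pX pH ω) :
    0 < PR pX pH (ω.1 * ω.2).rank :=
  ite_sum_pos _ (joint_nonneg hX hH)
    (fun ω' => (ω'.1 * ω'.2).rank = (ω.1 * ω.2).rank) ω rfl h

lemma GT_pos {T N : ℕ} (Y : Matrix (Fin T) (Fin N) F) : 0 < GT F T Y.rank := by
  have := (chi_ratio (⊤ : Submodule F (Fin T → F)) Y.rank (by simpa using Y.rank_le_height)).1
  unfold GT
  exact_mod_cast this

lemma miRankRank_eq0 {T M N : ℕ} (pX : Matrix (Fin T) (Fin M) F → ℝ)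
    {pH : Matrix (Fin M) (Fin N) F → ℝ} (hH : IsPMF pH) :
    miRankRank pX pH = ∑ ω : Matrix (Fin T) (Fin M) F × Matrix (Fin M) (Fin N) F,
      jointPMF pX pH ω * Real.logb 2 (prRankXY pX pH ω.1.rank (ω.1 * ω.2).rank /
        (prRankX pX ω.1.rank * PR pX pH (ω.1 * ω.2).rank)) := by
  unfold miRankRank mutualInfo
  refine Finset.sum_congr rfl fun ω _ => ?_
  rw [← prRankX_joint pX hH]
  unfold prRankXY PR
  congr!

lemma miColCol_eq0 {T M N : ℕ} (pX : Matrix (Fin T) (Fin M) F → ℝ)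
    {pH : Matrix (Fin M) (Fin N) F → ℝ} (hH : IsPMF pH)
    (husd : UniqueSubspaceDegradation T pH) :
    miColCol pX pH = ∑ ω : Matrix (Fin T) (Fin M) F × Matrix (Fin M) (Fin N) F,
      jointPMF pX pH ω * Real.logb 2
        ((∑ x : Matrix (Fin T) (Fin M) F × Matrix (Fin M) (Fin N) F,
          if colSpace x.1 = colSpace ω.1 then jointPMF pX pH x else 0) *
            prColY T pH ω.1 (colSpace (ω.1 * ω.2)) /
        ((∑ x : Matrix (Fin T) (Fin M) F × Matrix (Fin M) (Fin N) F,
          if colSpace x.1 = colSpace ω.1 then jointPMF pX pH x else 0) *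
            PY pX pH (colSpace (ω.1 * ω.2)))) := by
  unfold miColCol mutualInfo
  refine Finset.sum_congr rfl fun ω _ => ?_
  rw [← joint_factor pX hH (fun X => colSpace X) (fun Y => colSpace Y) (colSpace ω.1)
      (colSpace (ω.1 * ω.2)) (prColY T pH ω.1 (colSpace (ω.1 * ω.2)))
      (fun X hX => by
        rw [← husd (colSpace (ω.1 * ω.2)) _ _ hX]
        unfold prColY
        congr!)]
  unfold PY
  congr!

lemma main_identity {q T M N : ℕ} (hq : Fintype.card F = q)
    {pX : Matrix (Fin T) (Fin M) F → ℝ}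
    {pH : Matrix (Fin M) (Fin N) F → ℝ} (hX : IsPMF pX) (hH : IsPMF pH)
    (husd : UniqueSubspaceDegradation T pH) :
    Jrank q pX pH + miRankRank pX pH = miColCol pX pH + Dv pX pH := by
  subst hq
  rw [Jrank_eq, miRankRank_eq0 pX hH, miColCol_eq0 pX hH husd]
  unfold Dv
  rw [← Finset.sum_add_distrib, ← Finset.sum_add_distrib]
  refine Finset.sum_congr rfl fun ω _ => ?_
  rcases (joint_nonneg hX hH ω).eq_or_lt with h0 | hpos
  · rw [← h0]; simp
  rw [← mul_add, ← mul_add]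
  congr 1
  rw [prRankXY_factor pX hH husd]
  have hle : colSpace (ω.1 * ω.2) ≤ colSpace ω.1 := colSpace_mul_le _ _
  have hc := prRk_card husd ω.1 hle
  rw [finrank_colSpace] at hc
  have hr := chi_ratio (colSpace ω.1) (ω.1 * ω.2).rank (Matrix.rank_mul_le_left _ _)
  rw [finrank_colSpace] at hr
  rw [hr.2.2, hc]
  have hG := GT_pos (ω.1 * ω.2)
  have hPY := PY_pos hX hH ω hpos
  have hPR := PR_pos hX hH ω hpos
  have hA : 0 < prRankX pX ω.1.rank := by
    rw [← prRankX_joint pX hH]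
    exact ite_sum_pos _ (joint_nonneg hX hH) (fun x => x.1.rank = ω.1.rank) ω rfl hpos
  have hB : 0 < ∑ x, if colSpace x.1 = colSpace ω.1 then jointPMF pX pH x else 0 :=
    ite_sum_pos _ (joint_nonneg hX hH) (fun x => colSpace x.1 = colSpace ω.1) ω rfl hpos
  have hK : 0 < prColY T pH ω.1 (colSpace (ω.1 * ω.2)) := by
    refine ite_sum_pos _ hH.1 (fun x => colSpace (ω.1 * x) = colSpace (ω.1 * ω.2)) ω.2 rfl ?_
    exact pos_of_mul_pos_right hpos (hX.1 _)
  have hg : (0 : ℝ) < (subs (colSpace ω.1) (ω.1 * ω.2).rank).card := by exact_mod_cast hr.1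
  change Real.logb 2 (GT F T (ω.1 * ω.2).rank / _) +
    Real.logb 2 (_ / (_ * PR pX pH (ω.1 * ω.2).rank)) =
    Real.logb 2 (_ / (_ * PY pX pH (colSpace (ω.1 * ω.2)))) + _
  rw [← Real.logb_mul (by positivity) (by positivity),
    ← Real.logb_mul (by positivity) (by positivity)]
  congr 1
  field_simp

lemma Dv_nonneg {T M N : ℕ} {pX : Matrix (Fin T) (Fin M) F → ℝ}
    {pH : Matrix (Fin M) (Fin N) F → ℝ} (hX : IsPMF pX) (hH : IsPMF pH) : 0 ≤ Dv pX pH := by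
  set w : Submodule F (Fin T → F) → ℝ := fun V =>
    PR pX pH (finrank F V) / GT F T (finrank F V) with hw
  have hw0 : ∀ V, 0 ≤ w V := by
    intro V
    refine div_nonneg (Finset.sum_nonneg fun ω _ => ?_) (Nat.cast_nonneg _)
    split_ifs
    · exact joint_nonneg hX hH ω
    · exact le_rfl
  have hsw : ∑ V, w V = 1 := by
    simp only [hw, PR, Finset.sum_div]
    rw [Finset.sum_comm, ← joint_sum hX hH]
    refine Finset.sum_congr rfl fun ω _ => ?_
    have e : ∀ V : Submodule F (Fin T → F),
        (if (ω.1 * ω.2).rank = finrank F V then jointPMF pX pH ω else 0) / GT F T (finrank F V)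
        = if V ∈ subs (⊤ : Submodule F (Fin T → F)) (ω.1 * ω.2).rank then
          jointPMF pX pH ω / GT F T (ω.1 * ω.2).rank else 0 := by
      intro V
      simp only [subs, Finset.mem_filter, Finset.mem_univ, true_and, le_top]
      by_cases h : finrank F V = (ω.1 * ω.2).rank
      · simp [h]
      · rw [if_neg (fun h' => h h'.symm), if_neg h, zero_div]
    simp only [e]
    rw [Finset.sum_ite_mem, Finset.univ_inter, Finset.sum_const, nsmul_eq_mul]
    have := GT_pos (ω.1 * ω.2)
    change GT F T (ω.1 * ω.2).rank * _ = _
    field_simp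
  have hle : ∑ ω : Matrix (Fin T) (Fin M) F × Matrix (Fin M) (Fin N) F,
      jointPMF pX pH ω * (w (colSpace (ω.1 * ω.2)) / PY pX pH (colSpace (ω.1 * ω.2))) ≤ 1 := by
    rw [← hsw]
    have e : ∀ ω : Matrix (Fin T) (Fin M) F × Matrix (Fin M) (Fin N) F,
      jointPMF pX pH ω * (w (colSpace (ω.1 * ω.2)) / PY pX pH (colSpace (ω.1 * ω.2))) =
      ∑ V, (if colSpace (ω.1 * ω.2) = V then jointPMF pX pH ω else 0) * (w V / PY pX pH V) := by
      intro ω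
      simp only [ite_mul, zero_mul]
      rw [Finset.sum_ite_eq]
      simp
    simp only [e]
    rw [Finset.sum_comm]
    refine Finset.sum_le_sum fun V _ => ?_
    rw [← Finset.sum_mul]
    change PY pX pH V * _ ≤ _
    by_cases h : PY pX pH V = 0
    · rw [h, zero_mul]; exact hw0 V
    · rw [mul_div_cancel₀ _ h]
  have hmain : ∀ ω : Matrix (Fin T) (Fin M) F × Matrix (Fin M) (Fin N) F,
      (jointPMF pX pH ω -
        jointPMF pX pH ω * (w (colSpace (ω.1 * ω.2)) / PY pX pH (colSpace (ω.1 * ω.2)))) /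
          Real.log 2 ≤
      jointPMF pX pH ω * Real.logb 2
      (PY pX pH (colSpace (ω.1 * ω.2)) * GT F T (ω.1 * ω.2).rank /
        PR pX pH (ω.1 * ω.2).rank) := by
    intro ω
    rcases (joint_nonneg hX hH ω).eq_or_lt with h0 | hpos
    · rw [← h0]; simp
    have hG := GT_pos (ω.1 * ω.2)
    have hPY := PY_pos hX hH ω hpos
    have hPR := PR_pos hX hH ω hpos
    have h := Real.one_sub_inv_le_log_of_pos (div_pos (mul_pos hPY hG) hPR)
    have e : w (colSpace (ω.1 * ω.2)) / PY pX pH (colSpace (ω.1 * ω.2)) =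
      (PY pX pH (colSpace (ω.1 * ω.2)) * GT F T (ω.1 * ω.2).rank /
        PR pX pH (ω.1 * ω.2).rank)⁻¹ := by
      simp only [hw, finrank_colSpace]
      field_simp
    rw [e, Real.logb, ← mul_div_assoc]
    have hl : 0 < Real.log 2 := Real.log_pos one_lt_two
    refine div_le_div_of_nonneg_right ?_ hl.le
    nlinarith
  unfold Dv
  refine le_trans ?_ (Finset.sum_le_sum fun ω _ => hmain ω)
  rw [← Finset.sum_div, Finset.sum_sub_distrib, joint_sum hX hH]
  exact div_nonneg (by linarith) (Real.log_pos one_lt_two).le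

lemma PY_inv {T M N : ℕ} {pX : Matrix (Fin T) (Fin M) F → ℝ}
    (pH : Matrix (Fin M) (Fin N) F → ℝ) (hα : IsAlphaType pX)
    (V V' : Submodule F (Fin T → F)) (h : finrank F V = finrank F V') :
    PY pX pH V = PY pX pH V' := by
  obtain ⟨g, rfl⟩ := aux_exists_map h
  unfold PY
  refine Fintype.sum_equiv (Equiv.prodCongr (gperm g) (Equiv.refl _)) _ _ fun ω => ?_
  change _ = if colSpace (gmat g * ω.1 * ω.2) = _ then pX (gmat g * ω.1) * pH ω.2 else 0
  rw [Matrix.mul_assoc, colSpace_gmat_mul, hα _ _ (rowSpace_gmat_mul g ω.1)]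
  simp only [(Submodule.map_injective_of_injective g.injective).eq_iff]
  rfl

lemma Dv_alpha {T M N : ℕ} {pX : Matrix (Fin T) (Fin M) F → ℝ}
    {pH : Matrix (Fin M) (Fin N) F → ℝ} (hX : IsPMF pX) (hH : IsPMF pH)
    (hα : IsAlphaType pX) : Dv pX pH = 0 := by
  apply Finset.sum_eq_zero
  intro ω _
  rcases (joint_nonneg hX hH ω).eq_or_lt with h0 | hpos
  · rw [← h0]; simp
  have hPR := PR_pos hX hH ω hpos
  have e : PR pX pH (ω.1 * ω.2).rank =
      PY pX pH (colSpace (ω.1 * ω.2)) * GT F T (ω.1 * ω.2).rank := by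
    rw [PR_eq, Finset.sum_congr rfl (g := fun _ => PY pX pH (colSpace (ω.1 * ω.2))),
      Finset.sum_const, nsmul_eq_mul, mul_comm]
    · rfl
    · intro V hV
      simp only [subs, Finset.mem_filter, Finset.mem_univ, true_and] at hV
      exact PY_inv pH hα _ _ hV.2
  rw [← e, div_self hPR.ne', Real.logb_one, mul_zero]

/-- Number of matrices of a given rank. -/
def nRk (F : Type) [Field F] [Fintype F] (T M r : ℕ) : ℝ :=
  ∑ X : Matrix (Fin T) (Fin M) F, if X.rank = r then 1 else 0

/-- Symmetrized input: uniform given rank. -/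
def sym {T M : ℕ} (pX : Matrix (Fin T) (Fin M) F → ℝ) : Matrix (Fin T) (Fin M) F → ℝ :=
  fun X => prRankX pX X.rank / nRk F T M X.rank

lemma nRk_pos {T M : ℕ} (X : Matrix (Fin T) (Fin M) F) : 0 < nRk F T M X.rank :=
  ite_sum_pos (fun _ => (1 : ℝ)) (fun _ => zero_le_one)
    (fun X' : Matrix (Fin T) (Fin M) F => X'.rank = X.rank) X rfl one_pos

lemma sym_rank {T M : ℕ} (pX : Matrix (Fin T) (Fin M) F → ℝ) (r : ℕ) :
    prRankX (sym pX) r = prRankX pX r := by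
  by_cases hr : ∃ X0 : Matrix (Fin T) (Fin M) F, X0.rank = r
  · obtain ⟨X0, rfl⟩ := hr
    have e : ∀ X : Matrix (Fin T) (Fin M) F, (if X.rank = X0.rank then sym pX X else 0) =
      (prRankX pX X0.rank / nRk F T M X0.rank) * if X.rank = X0.rank then 1 else 0 := by
      intro X
      by_cases h : X.rank = X0.rank
      · simp [h, sym]
      · simp [h]
    have hp := nRk_pos X0
    conv_lhs => unfold prRankX
    simp only [e]
    rw [← Finset.mul_sum]
    change _ * nRk F T M X0.rank = _
    field_simp
  · push Not at hr
    unfold prRankX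
    simp [hr]

lemma sum_prRankX {T M : ℕ} (pX : Matrix (Fin T) (Fin M) F → ℝ) :
    ∑ r ∈ Finset.range (T + 1), prRankX pX r = ∑ X, pX X := by
  unfold prRankX
  rw [Finset.sum_comm]
  refine Finset.sum_congr rfl fun X _ => ?_
  have := X.rank_le_height
  rw [Finset.sum_ite_eq, if_pos (by simp; omega)]

lemma sym_pmf {T M : ℕ} {pX : Matrix (Fin T) (Fin M) F → ℝ} (hX : IsPMF pX) :
    IsPMF (sym pX) := by
  constructor
  · intro X
    refine div_nonneg (Finset.sum_nonneg fun x _ => ?_) (nRk_pos X).le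
    split_ifs
    · exact hX.1 x
    · exact le_rfl
  · rw [← sum_prRankX, ← hX.2, ← sum_prRankX]
    exact Finset.sum_congr rfl fun r _ => sym_rank pX r

lemma sym_alpha {T M : ℕ} (pX : Matrix (Fin T) (Fin M) F → ℝ) : IsAlphaType (sym pX) := by
  intro X X' h
  unfold sym
  rw [rank_eq_of_rowSpace h]

lemma Jrank_congr (q : ℕ) {T M N : ℕ} {pX pX' : Matrix (Fin T) (Fin M) F → ℝ}
    {pH : Matrix (Fin M) (Fin N) F → ℝ}
    (h : ∀ r s, prRankXY pX pH r s = prRankXY pX' pH r s) :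
    Jrank q pX pH = Jrank q pX' pH := by
  unfold Jrank
  simp only [h]

lemma PR_range {T M N : ℕ} (pX : Matrix (Fin T) (Fin M) F → ℝ)
    (pH : Matrix (Fin M) (Fin N) F → ℝ) (s : ℕ) :
    PR pX pH s = ∑ r ∈ Finset.range (T + 1), prRankXY pX pH r s := by
  unfold PR prRankXY
  rw [Finset.sum_comm]
  refine Finset.sum_congr rfl fun ω _ => ?_
  have := ω.1.rank_le_height
  by_cases h : (ω.1 * ω.2).rank = s
  · simp only [h, and_true, if_true]
    rw [Finset.sum_ite_eq, if_pos (by simp; omega)]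
  · simp [h]

lemma miRankRank_eq {T M N : ℕ} (pX : Matrix (Fin T) (Fin M) F → ℝ)
    {pH : Matrix (Fin M) (Fin N) F → ℝ} (hH : IsPMF pH) :
    miRankRank pX pH = ∑ r ∈ Finset.range (T + 1), ∑ s ∈ Finset.range (T + 1),
      prRankXY pX pH r s * Real.logb 2 (prRankXY pX pH r s / (prRankX pX r * PR pX pH s)) := by
  have e := miRankRank_eq0 pX hH
  rw [e]
  have e2 : ∀ ω : Matrix (Fin T) (Fin M) F × Matrix (Fin M) (Fin N) F,
      jointPMF pX pH ω * Real.logb 2 (prRankXY pX pH ω.1.rank (ω.1 * ω.2).rank /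
        (prRankX pX ω.1.rank * PR pX pH (ω.1 * ω.2).rank)) =
      ∑ r ∈ Finset.range (T + 1), ∑ s ∈ Finset.range (T + 1),
        (if ω.1.rank = r ∧ (ω.1 * ω.2).rank = s then jointPMF pX pH ω else 0) *
          Real.logb 2 (prRankXY pX pH r s / (prRankX pX r * PR pX pH s)) := by
    intro ω
    have h1 : ω.1.rank ∈ Finset.range (T + 1) := by
      have := ω.1.rank_le_height
      simp; omega
    have h2 : (ω.1 * ω.2).rank ∈ Finset.range (T + 1) := by
      have := (ω.1 * ω.2).rank_le_height
      simp; omega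
    rw [Finset.sum_eq_single_of_mem _ h1, Finset.sum_eq_single_of_mem _ h2]
    · simp
    · intro b _ hb
      rw [if_neg (fun h => hb h.2.symm), zero_mul]
    · intro b _ hb
      apply Finset.sum_eq_zero
      intro s _
      rw [if_neg (fun h => hb h.1.symm), zero_mul]
  rw [Finset.sum_congr rfl fun ω _ => e2 ω, Finset.sum_comm]
  refine Finset.sum_congr rfl fun r _ => ?_
  rw [Finset.sum_comm]
  refine Finset.sum_congr rfl fun s _ => ?_
  rw [← Finset.sum_mul]
  rfl

/-- for a LOC with a unique subspace degradation, the subspace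
coding capacity equals the maximum over α-type inputs of J(rank X;rank Y) +
I(rank X;rank Y); moreover the joint rank distribution under an α-type input
depends only on the input rank distribution. -/
theorem unique_subspace_degradation_capacity
    {F : Type} [Field F] [Fintype F] (q T M N : ℕ) (hq : Fintype.card F = q)
    (pH : Matrix (Fin M) (Fin N) F → ℝ) (hpH : IsPMF pH)
    (husd : UniqueSubspaceDegradation T pH) :
    (sSup {c : ℝ | ∃ pX : Matrix (Fin T) (Fin M) F → ℝ,
          IsPMF pX ∧ c = miColCol pX pH}
      = sSup {c : ℝ | ∃ pX : Matrix (Fin T) (Fin M) F → ℝ,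
          IsPMF pX ∧ IsAlphaType pX ∧ c = Jrank q pX pH + miRankRank pX pH})
    ∧ (∀ pX pX' : Matrix (Fin T) (Fin M) F → ℝ,
        IsPMF pX → IsAlphaType pX → IsPMF pX' → IsAlphaType pX' →
        (∀ r : ℕ, prRankX pX r = prRankX pX' r) →
        ∀ r s : ℕ, prRankXY pX pH r s = prRankXY pX' pH r s) := by
  refine ⟨?_, fun pX pX' _ _ _ _ h r s => prRankXY_eq hpH husd pX pX' h r s⟩
  apply csSup_eq_csSup_of_forall_exists_le
  · rintro _ ⟨pX, hX, rfl⟩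
    refine ⟨_, ⟨sym pX, sym_pmf hX, sym_alpha pX, rfl⟩, ?_⟩
    have hr : ∀ r, prRankX (sym pX) r = prRankX pX r := sym_rank pX
    have hrs := prRankXY_eq hpH husd (sym pX) pX hr
    have hI : miRankRank (sym pX) pH = miRankRank pX pH := by
      rw [miRankRank_eq _ hpH, miRankRank_eq _ hpH]
      simp only [PR_range, hrs, hr]
    rw [Jrank_congr q hrs, hI, main_identity hq hX hpH husd]
    have := Dv_nonneg hX hpH
    linarith
  · rintro _ ⟨pX, hX, hα, rfl⟩
    refine ⟨_, ⟨pX, hX, rfl⟩, ?_⟩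
    rw [main_identity hq hX hpH husd, Dv_alpha hX hpH hα, add_zero]
end
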